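/- Unrestricted unrolling is derivable in Milner's star fragment: for every star expression e (guarded or not), SL* ⊢ e* = e·e* + 1. -/

import Mathlib

/-- Star expressions for the semilattice theory (Milner's star fragment):
`e ::= 0 | 1 | a | e1 + e2 | e1·e2 | e*`. -/
inductive SExp (A : Type) : Type
  | zero : SExp A
  | one : SExp A
  | act : A → SExp A
  | add : SExp A → SExp A → SExp A
  | seq : SExp A → SExp A → SExp A
  | star : SExp A → SExp A
  deriving DecidableEq

namespace SExp

variable {A : Type} [DecidableEq A]

/-- Post-compose the expression component of a step with `·f`; checkmarks
(represented as `Sum.inl ()`) are kept as checkmarks. -/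
def seqAfter (f : SExp A) : Unit ⊕ A × SExp A → Unit ⊕ A × SExp A
  | Sum.inl _ => Sum.inl ()
  | Sum.inr (a, e') => Sum.inr (a, seq e' f)

/-- The small-step semantics `ℓ : SExp → Finset ({✓} ⊕ A × SExp)`, with `✓`
represented as `Sum.inl ()`. -/
def ell : SExp A → Finset (Unit ⊕ A × SExp A)
  | zero => ∅
  | one => {Sum.inl ()}
  | act a => {Sum.inr (a, one)}
  | add e f => ell e ∪ ell f
  | seq e f =>
      ((ell e).image (seqAfter f)).erase (Sum.inl ()) ∪
        (if Sum.inl () ∈ ell e then ell f else ∅)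
  | star e =>
      insert (Sum.inl ()) (((ell e).image (seqAfter (star e))).erase (Sum.inl ()))

/-- `e → ✓`, i.e. `✓ ∈ ℓ(e)`. -/
def Checks (e : SExp A) : Prop := Sum.inl () ∈ ell e

instance (e : SExp A) : Decidable (Checks e) := by unfold Checks; infer_instance

/-- Guardedness of star expressions. -/
def Guarded : SExp A → Prop
  | zero => True
  | one => False
  | act _ => True
  | add e f => Guarded e ∧ Guarded f
  | seq e f => Guarded e ∨ Guarded f
  | star _ => False

/-- Derivability `SL* ⊢ e = f` in equational logic from the semilattice
axioms, the sequencing axioms, the star axiom `(e + 1)* = (e + 0)*`, the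
guarded unrolling axiom, and the fixpoint rule. -/
inductive SLd : SExp A → SExp A → Prop
  | refl (e) : SLd e e
  | symm {e f} : SLd e f → SLd f e
  | trans {e f g} : SLd e f → SLd f g → SLd e g
  | addCongr {e1 f1 e2 f2} : SLd e1 f1 → SLd e2 f2 → SLd (add e1 e2) (add f1 f2)
  | seqCongr {e1 f1 e2 f2} : SLd e1 f1 → SLd e2 f2 → SLd (seq e1 e2) (seq f1 f2)
  | starCongr {e f} : SLd e f → SLd (star e) (star f)
  | addZero (e) : SLd (add e zero) e
  | addIdem (e) : SLd (add e e) e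
  | addComm (e f) : SLd (add e f) (add f e)
  | addAssoc (e f g) : SLd (add (add e f) g) (add e (add f g))
  | oneSeq (e) : SLd (seq one e) e
  | seqOne (e) : SLd (seq e one) e
  | zeroSeq (e) : SLd (seq zero e) zero
  | seqAssoc (e f g) : SLd (seq e (seq f g)) (seq (seq e f) g)
  | distR (e f g) : SLd (seq (add e f) g) (add (seq e g) (seq f g))
  | starOne (e) : SLd (star (add e one)) (star (add e zero))
  | unroll {e} : Guarded e → SLd (star e) (add (seq e (star e)) one)
  | fix {e f g} : SLd g (add (seq e g) f) → Guarded e → SLd g (seq (star e) f)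

/-- The derivative `∂e`. -/
def deriv : SExp A → SExp A
  | zero => zero
  | one => zero
  | act a => act a
  | add e f => add (deriv e) (deriv f)
  | seq e f =>
      if Sum.inl () ∈ ell e then add (seq (deriv e) f) (deriv f)
      else seq (deriv e) f
  | star e => seq (deriv e) (star e)

end SExp

namespace SExp

/-- Star of an expression with guarded part `d` unrolls via `d`. -/
theorem star_unroll_aux {A : Type} [DecidableEq A] {e d : SExp A} (hd : Guarded d)
    (h : SLd e d ∨ SLd e (add d one)) :
    SLd (star e) (add (seq d (star e)) one) := by
  have hs : SLd (star e) (star d) := by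
    rcases h with h | h
    · exact .starCongr h
    · exact (SLd.starCongr h).trans ((SLd.starOne d).trans (.starCongr (.addZero d)))
  exact hs.trans ((SLd.unroll hd).trans
    (.addCongr (.seqCongr (.refl _) hs.symm) (.refl _)))

/-- Every expression is provably a guarded one, possibly plus `1`. -/
theorem guarded_form {A : Type} [DecidableEq A] (e : SExp A) :
    ∃ d : SExp A, Guarded d ∧ (SLd e d ∨ SLd e (add d one)) := by
  induction e with
  | zero => exact ⟨zero, trivial, .inl (.refl _)⟩
  | one => exact ⟨zero, trivial, .inr ((SLd.addZero one).symm.trans (.addComm _ _))⟩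
  | act a => exact ⟨act a, trivial, .inl (.refl _)⟩
  | add e f ihe ihf =>
    obtain ⟨d, hd, he⟩ := ihe
    obtain ⟨c, hc, hf⟩ := ihf
    refine ⟨add d c, ⟨hd, hc⟩, ?_⟩
    rcases he with he | he <;> rcases hf with hf | hf
    · exact .inl (.addCongr he hf)
    · exact .inr ((SLd.addCongr he hf).trans (SLd.addAssoc _ _ _).symm)
    · refine .inr ((SLd.addCongr he hf).trans ((SLd.addAssoc _ _ _).trans ?_))
      exact (SLd.addCongr (.refl _) (.addComm _ _)).trans (SLd.addAssoc _ _ _).symm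
    · refine .inr ((SLd.addCongr he hf).trans ((SLd.addAssoc _ _ _).trans ?_))
      refine (SLd.addCongr (.refl _) ?_).trans (SLd.addAssoc _ _ _).symm
      refine (SLd.addComm _ _).trans ((SLd.addAssoc _ _ _).trans ?_)
      exact .addCongr (.refl _) (.addIdem _)
  | seq e f ihe ihf =>
    obtain ⟨d, hd, he⟩ := ihe
    obtain ⟨c, hc, hf⟩ := ihf
    rcases he with he | he
    · exact ⟨seq d f, .inl hd, .inl (.seqCongr he (.refl _))⟩
    · have h1 : SLd (seq e f) (add (seq d f) f) :=
        (SLd.seqCongr he (.refl _)).trans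
          ((SLd.distR _ _ _).trans (.addCongr (.refl _) (.oneSeq _)))
      refine ⟨add (seq d f) c, ⟨.inl hd, hc⟩, ?_⟩
      rcases hf with hf | hf
      · exact .inl (h1.trans (.addCongr (.refl _) hf))
      · exact .inr (h1.trans ((SLd.addCongr (.refl _) hf).trans (SLd.addAssoc _ _ _).symm))
  | star e ihe =>
    obtain ⟨d, hd, he⟩ := ihe
    exact ⟨seq d (star e), .inl hd, .inr (star_unroll_aux hd he)⟩

end SExp

/-- Unrestricted unrolling is derivable in Milner's star fragment: for every
star expression `e` (guarded or not), `SL* ⊢ e* = e·e* + 1`. -/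
theorem sl_unrestricted_unrolling {A : Type} [DecidableEq A] (e : SExp A) :
    SExp.SLd (SExp.star e) (SExp.add (SExp.seq e (SExp.star e)) SExp.one) := by
  obtain ⟨d, hd, he⟩ := SExp.guarded_form e
  have hu := SExp.star_unroll_aux hd he
  rcases he with he | he
  · exact hu.trans (.addCongr (.seqCongr he.symm (.refl _)) (.refl _))
  · have h1 : SExp.SLd (SExp.seq e e.star) (SExp.add (SExp.seq d e.star) e.star) :=
      (SExp.SLd.seqCongr he (.refl _)).trans
        ((SExp.SLd.distR _ _ _).trans (.addCongr (.refl _) (.oneSeq _)))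
    refine (SExp.SLd.trans (.addCongr h1 (.refl _)) ?_).symm
    refine (SExp.SLd.addAssoc _ _ _).trans ?_
    refine (SExp.SLd.addCongr (.refl _) (.addComm _ _)).trans ?_
    refine (SExp.SLd.addAssoc _ _ _).symm.trans ?_
    exact (SExp.SLd.addCongr hu.symm (.refl _)).trans (.addIdem _)
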